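/- Let h ≥ 0 entrywise with ĥ = min_i h_i > 0. Then |m_1 − tanh(h_1 + Σ_{i=1}^N J_{1i} m_i)| ≤ (‖J_1‖_∞/ĥ) · (3 + ‖J_1‖_1 + log(1 + ‖J_1‖_1/ĥ)). -/

import Mathlib

/-!
The bound holds because the Gibbs measure concentrates the local field
`Y = h_1 + ∑_{j ≠ 1} J_{1j} σ_j` around its mean `a`.

Conditioning on all spins but the first gives the exact identity `m_1 = ⟨tanh Y⟩` (`dlr`). Since
`|tanh''| ≤ 2`, Jensen's inequality for the convex functions `y² ± tanh y` yields
`|⟨tanh Y⟩ - tanh a| ≤ Var Y` (`abs_tanh_mean_sub_le`). With the covariances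
`C_{ij} = ⟨σ_i σ_j⟩ - m_i m_j ≥ 0`,
`Var Y ≤ ∑_{i,j} J_{1i} J_{1j} C_{ij} ≤ ‖J_1‖_∞ ‖J_1‖_1 max_i ∑_j C_{ij}`. The remaining difference
between `tanh a` and `tanh (a + J_{11} m_1)` is at most `J_{11} / ĥ`, because `tanh' ≤ 1 / ĥ` on
`[ĥ, ∞)`. These estimates give the bound `(‖J_1‖_∞ / ĥ) (1 + ‖J_1‖_1)`, which is smaller than the
one asserted.

The bound `∑_j C_{ij} ≤ 1 / ĥ` (`sum_cov_le`) comes from the Griffiths-Hurst-Sherman inequality: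
if the field is `s h`, then `s ↦ m_i` is concave on `[0, ∞)` with values in `[0, 1]`, so that its
derivative `∑_j h_j C_{ij}` at `s = 1` is at most `1`.

The two Griffiths inequalities and the GHS inequality all follow the replica method of Ellis and
Monroe. On four independent copies of the system, rotate the four spins at each site by a
Hadamard matrix with rows `w_0, …, w_3`. The Boltzmann weight becomes the exponential of a
polynomial with nonnegative coefficients in the rotated spins, and each single-site moment
`∑ w_0^a w_1^b w_2^c w_3^d` is nonnegative. Hence `0 ≤ ⟨f⟩` for all `f` in the closed semiring
generated by the rotated spins and the nonnegative constants (`posCone`). The first, second and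
third cumulants are multiples of `⟨w_0⟩`, `⟨w_1 w_1⟩` and `-⟨w_1 w_2 w_3⟩`.
-/

open Finset

/-! ### Positivity on four replicas -/

/-- The spin value `±1` encoded by a Boolean. -/
def sp (b : Bool) : ℝ := if b then 1 else -1

/-- A Hadamard matrix. The sign of the last row is such that the product of the four rotated
spins is nonnegative on every configuration of four spins. -/
def had : Fin 4 → Fin 4 → ℝ :=
  ![![1, 1, 1, 1], ![1, 1, -1, -1], ![1, -1, 1, -1], ![-1, 1, 1, -1]]

/-- The `k`-th rotated spin at site `i` of a configuration `σ` of four replicas. -/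
def rot {ι : Type*} (k : Fin 4) (i : ι) (σ : Fin 4 → ι → Bool) : ℝ :=
  ∑ r, had k r * sp (σ r i)

/-- The closed semiring of functions on four replicas generated by the nonnegative constants and
the rotated spins. -/
def posCone (ι : Type*) : Subsemiring ((Fin 4 → ι → Bool) → ℝ) :=
  (Subsemiring.closure
    ({f | ∃ c : ℝ, 0 ≤ c ∧ f = fun _ => c} ∪ {f | ∃ k i, f = rot k i})).topologicalClosure

lemma had_sums (t : Fin 4 → ℝ) :
    (∑ r, had 0 r * t r = t 0 + t 1 + t 2 + t 3) ∧ (∑ r, had 1 r * t r = t 0 + t 1 - t 2 - t 3) ∧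
    (∑ r, had 2 r * t r = t 0 - t 1 + t 2 - t 3) ∧
    (∑ r, had 3 r * t r = -t 0 + t 1 + t 2 - t 3) := by
  refine ⟨?_, ?_, ?_, ?_⟩ <;> rw [Fin.sum_univ_four] <;> simp [had] <;> ring

/-- All joint moments of the four rotated spins at one site are nonnegative. The vector of rotated
spins is `±4` times a basis vector if an even number of the spins are `-1`, and has four entries
`±2` with positive product otherwise. -/
lemma single_site_nonneg (a : Fin 4 → ℕ) :
    0 ≤ ∑ τ : Fin 4 → Bool, ∏ k, (∑ r, had k r * sp (τ r)) ^ a k := by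
  have key : ∑ τ : Fin 4 → Bool, ∏ k, (∑ r, had k r * sp (τ r)) ^ a k
      = ∑ b0, ∑ b1, ∑ b2, ∑ b3, ((sp b0 + sp b1 + sp b2 + sp b3) ^ a 0 *
        (sp b0 + sp b1 - sp b2 - sp b3) ^ a 1 * (sp b0 - sp b1 + sp b2 - sp b3) ^ a 2 *
        (-sp b0 + sp b1 + sp b2 - sp b3) ^ a 3) := by
    rw [← (Fin.consEquiv (fun _ => Bool)).sum_comp, Fintype.sum_prod_type]
    refine Finset.sum_congr rfl fun b0 _ => ?_
    rw [← (Fin.consEquiv (fun _ => Bool)).sum_comp, Fintype.sum_prod_type]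
    refine Finset.sum_congr rfl fun b1 _ => ?_
    rw [← (Fin.consEquiv (fun _ => Bool)).sum_comp, Fintype.sum_prod_type]
    refine Finset.sum_congr rfl fun b2 _ => ?_
    rw [← (Fin.consEquiv (fun _ => Bool)).sum_comp, Fintype.sum_prod_type]
    refine Finset.sum_congr rfl fun b3 _ => ?_
    rw [Fintype.sum_unique, Fin.prod_univ_four, (had_sums _).1, (had_sums _).2.1,
      (had_sums _).2.2.1, (had_sums _).2.2.2]
    rfl
  rw [key]
  simp only [Fintype.sum_bool, sp]
  norm_num
  rcases (a 0).even_or_odd with h0 | h0 <;> rcases (a 1).even_or_odd with h1 | h1 <;>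
    rcases (a 2).even_or_odd with h2 | h2 <;> rcases (a 3).even_or_odd with h3 | h3 <;>
    simp only [h0.neg_pow, h1.neg_pow, h2.neg_pow, h3.neg_pow] <;> ring_nf <;> positivity

/-- The multiplicative part of `posCone` consists of monomials in the rotated spins. -/
lemma monomial_form {ι : Type*} [Fintype ι] {f : (Fin 4 → ι → Bool) → ℝ}
    (hf : f ∈ Submonoid.closure
      ({f | ∃ c : ℝ, 0 ≤ c ∧ f = fun _ => c} ∪ {f | ∃ k i, f = rot k i} :
        Set ((Fin 4 → ι → Bool) → ℝ))) :
    ∃ (c : ℝ) (a : ι → Fin 4 → ℕ), 0 ≤ c ∧ f = fun σ => c * ∏ i, ∏ k, rot k i σ ^ a i k := by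
  classical
  induction hf using Submonoid.closure_induction with
  | mem f hf =>
    rcases hf with ⟨c, hc, rfl⟩ | ⟨k, i, rfl⟩
    · exact ⟨c, fun _ _ => 0, hc, by simp⟩
    · refine ⟨1, fun j l => if j = i then (if l = k then 1 else 0) else 0, zero_le_one, ?_⟩
      funext σ
      rw [one_mul, Finset.prod_eq_single i, Finset.prod_eq_single k]
      · simp
      · intro l _ hl; simp [hl]
      · simp
      · intro j _ hj; simp [hj]
      · simp
  | one => exact ⟨1, fun _ _ => 0, zero_le_one, by funext σ; simp⟩
  | mul f g _ _ hf hg =>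
    obtain ⟨c, a, hc, rfl⟩ := hf
    obtain ⟨d, b, hd, rfl⟩ := hg
    refine ⟨c * d, fun i k => a i k + b i k, mul_nonneg hc hd, ?_⟩
    funext σ
    simp only [Pi.mul_apply, pow_add, Finset.prod_mul_distrib]
    ring

/-- Sums of monomials factor over the sites. -/
lemma sum_monomial_nonneg {ι : Type*} [Fintype ι] [DecidableEq ι] (a : ι → Fin 4 → ℕ) :
    0 ≤ ∑ σ : Fin 4 → ι → Bool, ∏ i, ∏ k, rot k i σ ^ a i k := by
  rw [← (Equiv.piComm (fun (_ : ι) (_ : Fin 4) => Bool)).sum_comp]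
  have : ∀ τ : ι → Fin 4 → Bool,
      (∏ i, ∏ k, rot k i (Equiv.piComm (fun (_ : ι) (_ : Fin 4) => Bool) τ) ^ a i k)
      = ∏ i, ∏ k, (∑ r, had k r * sp (τ i r)) ^ a i k := fun τ => rfl
  simp only [this]
  have h := Finset.prod_univ_sum (fun _ : ι => (Finset.univ : Finset (Fin 4 → Bool)))
    (fun i τ => ∏ k, (∑ r, had k r * sp (τ r)) ^ a i k)
  rw [Fintype.piFinset_univ] at h
  rw [← h]
  exact Finset.prod_nonneg fun i _ => single_site_nonneg (a i)

lemma sum_nonneg_of_mem_posCone {ι : Type*} [Fintype ι] [DecidableEq ι]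
    {f : (Fin 4 → ι → Bool) → ℝ} (hf : f ∈ posCone ι) : 0 ≤ ∑ σ, f σ := by
  have hclosed : IsClosed {f : (Fin 4 → ι → Bool) → ℝ | 0 ≤ ∑ σ, f σ} :=
    isClosed_le continuous_const (by fun_prop)
  refine closure_minimal (fun f hf => ?_) hclosed hf
  rw [SetLike.mem_coe, Subsemiring.mem_closure_iff] at hf
  induction hf using AddSubmonoid.closure_induction with
  | mem f hf =>
    obtain ⟨c, a, hc, rfl⟩ := monomial_form hf
    simp only [Set.mem_ofPred_eq, ← Finset.mul_sum]
    exact mul_nonneg hc (sum_monomial_nonneg a)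
  | zero => simp
  | add f g _ _ hf hg =>
    simp only [Set.mem_ofPred_eq, Pi.add_apply, Finset.sum_add_distrib] at *
    exact add_nonneg hf hg

lemma const_mem_posCone {ι : Type*} {c : ℝ} (hc : 0 ≤ c) :
    (fun _ => c : (Fin 4 → ι → Bool) → ℝ) ∈ posCone ι :=
  Subsemiring.le_topologicalClosure _ (Subsemiring.subset_closure (Or.inl ⟨c, hc, rfl⟩))

lemma rot_mem_posCone {ι : Type*} (k : Fin 4) (i : ι) : rot k i ∈ posCone ι :=
  Subsemiring.le_topologicalClosure _ (Subsemiring.subset_closure (Or.inr ⟨k, i, rfl⟩))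

/-- The exponential is a limit of polynomials with nonnegative coefficients. -/
lemma exp_mem_posCone {ι : Type*} {f : (Fin 4 → ι → Bool) → ℝ} (hf : f ∈ posCone ι) :
    (fun σ => Real.exp (f σ)) ∈ posCone ι := by
  have hlim : Filter.Tendsto
      (fun n : ℕ => ∑ j ∈ Finset.range n, (fun _ => ((j.factorial : ℝ)⁻¹)) * f ^ j)
      Filter.atTop (nhds fun σ => Real.exp (f σ)) := by
    rw [tendsto_pi_nhds]
    intro σ
    have := (NormedSpace.expSeries_div_hasSum_exp (f σ)).tendsto_sum_nat
    rw [← Real.exp_eq_exp_ℝ] at this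
    refine this.congr fun n => ?_
    simp [Finset.sum_apply, div_eq_inv_mul]
  refine (Subsemiring.isClosed_topologicalClosure _).mem_of_tendsto hlim
    (Filter.Eventually.of_forall fun n => ?_)
  exact sum_mem fun j _ => mul_mem (const_mem_posCone (by positivity)) (pow_mem hf j)

/-! ### Moments of the replicated Gibbs weight -/

/-- The Boltzmann weight for couplings `J` and field `s h`. -/
noncomputable def wt {ι : Type*} [Fintype ι] (J : ι → ι → ℝ) (h : ι → ℝ) (s : ℝ)
    (ω : ι → Bool) : ℝ :=
  Real.exp (1 / 2 * (∑ i, ∑ j, J i j * sp (ω i) * sp (ω j)) + s * ∑ i, h i * sp (ω i))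

/-- The unnormalized moment of `f` under the weight `W`; `mom W 1` is the partition function. -/
def mom {Ω : Type*} [Fintype Ω] (W f : Ω → ℝ) : ℝ := ∑ ω, f ω * W ω

/-- The interaction of the four replicas is diagonal in the rotated spins, with coefficients of
the same sign. -/
lemma rot_orthogonal {ι : Type*} (i j : ι) (σ : Fin 4 → ι → Bool) :
    ∑ k, rot k i σ * rot k j σ = 4 * ∑ q, sp (σ q i) * sp (σ q j) := by
  simp only [rot, Fin.sum_univ_four (f := fun k => (∑ r, had k r * _) * _)]
  simp only [(had_sums fun r => sp (σ r i)).1, (had_sums fun r => sp (σ r i)).2.1,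
    (had_sums fun r => sp (σ r i)).2.2.1, (had_sums fun r => sp (σ r i)).2.2.2,
    (had_sums fun r => sp (σ r j)).1, (had_sums fun r => sp (σ r j)).2.1,
    (had_sums fun r => sp (σ r j)).2.2.1, (had_sums fun r => sp (σ r j)).2.2.2,
    Fin.sum_univ_four]
  ring

lemma rot_zero {ι : Type*} (i : ι) (σ : Fin 4 → ι → Bool) :
    rot 0 i σ = ∑ q, sp (σ q i) := by
  rw [rot, (had_sums _).1, Fin.sum_univ_four]

lemma wt_mem_posCone {ι : Type*} [Fintype ι] {J : ι → ι → ℝ} {h : ι → ℝ} {s : ℝ}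
    (hJ : ∀ i j, 0 ≤ J i j) (hh : ∀ i, 0 ≤ h i) (hs : 0 ≤ s) :
    (fun σ : Fin 4 → ι → Bool => ∏ q, wt J h s (σ q)) ∈ posCone ι := by
  have hmem : (∑ i, ∑ j, ∑ k, (fun _ => J i j / 8) * (rot k i * rot k j)
      + ∑ i, (fun _ => s * h i) * rot 0 i) ∈ posCone ι :=
    add_mem (sum_mem fun i _ => sum_mem fun j _ => sum_mem fun k _ =>
        mul_mem (const_mem_posCone (div_nonneg (hJ i j) (by norm_num)))
          (mul_mem (rot_mem_posCone k i) (rot_mem_posCone k j)))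
      (sum_mem fun i _ => mul_mem (const_mem_posCone (mul_nonneg hs (hh i))) (rot_mem_posCone 0 i))
  convert exp_mem_posCone hmem using 2 with σ
  simp only [wt, ← Real.exp_sum]
  congr 1
  simp only [Pi.add_apply, Finset.sum_apply, Pi.mul_apply, ← Finset.mul_sum, rot_orthogonal,
    rot_zero, Finset.sum_add_distrib]
  congr 1
  · rw [Finset.sum_comm, Finset.mul_sum]
    refine Finset.sum_congr rfl fun i _ => ?_
    rw [Finset.sum_comm, Finset.mul_sum]
    refine Finset.sum_congr rfl fun j _ => ?_
    simp only [Finset.mul_sum]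
    refine Finset.sum_congr rfl fun q _ => ?_
    ring
  · rw [Finset.sum_comm, Finset.mul_sum]
    refine Finset.sum_congr rfl fun i _ => ?_
    rw [Finset.mul_sum, Finset.mul_sum]
    refine Finset.sum_congr rfl fun q _ => ?_
    ring

/-- The replicas are independent. -/
lemma replica_moment {Ω : Type*} [Fintype Ω] [DecidableEq Ω] (W x y z : Ω → ℝ) (r s t : Fin 4) :
    ∑ σ : Fin 4 → Ω, x (σ r) * y (σ s) * z (σ t) * ∏ q, W (σ q) =
      ∏ q, ∑ ω, ((if r = q then x ω else 1) * (if s = q then y ω else 1) *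
        (if t = q then z ω else 1)) * W ω := by
  rw [Finset.prod_univ_sum, Fintype.piFinset_univ]
  refine Finset.sum_congr rfl fun σ _ => ?_
  simp only [Finset.prod_mul_distrib, Finset.prod_ite_eq, Finset.mem_univ, if_true]

lemma replica_trilinear {Ω : Type*} [Fintype Ω] [DecidableEq Ω] (W x y z : Ω → ℝ)
    (a b c : Fin 4 → ℝ) :
    ∑ σ : Fin 4 → Ω, (∑ r, a r * x (σ r)) * (∑ r, b r * y (σ r)) * (∑ r, c r * z (σ r)) *
        ∏ q, W (σ q) =
      ∑ r, ∑ s, ∑ t, a r * b s * c t * ∏ q, ∑ ω, ((if r = q then x ω else 1) *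
        (if s = q then y ω else 1) * (if t = q then z ω else 1)) * W ω := by
  conv_rhs => simp only [← replica_moment, Finset.mul_sum]
  symm
  simp only [Finset.sum_comm (s := (univ : Finset (Fin 4))) (t := (univ : Finset (Fin 4 → Ω)))]
  refine Finset.sum_congr rfl fun σ _ => ?_
  rw [Finset.sum_mul_sum, Finset.sum_mul, Finset.sum_mul]
  refine Finset.sum_congr rfl fun r _ => ?_
  rw [Finset.sum_mul, Finset.sum_mul]
  refine Finset.sum_congr rfl fun s _ => ?_
  rw [Finset.mul_sum, Finset.sum_mul]
  refine Finset.sum_congr rfl fun t _ => ?_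
  ring

/-- Up to a negative factor, the right-hand side is the third joint cumulant of `x`, `y`, `z`. -/
lemma replica_cumulant_three {Ω : Type*} [Fintype Ω] [DecidableEq Ω] (W x y z : Ω → ℝ) :
    ∑ σ : Fin 4 → Ω, (∑ r, had 1 r * x (σ r)) * (∑ r, had 2 r * y (σ r)) *
        (∑ r, had 3 r * z (σ r)) * ∏ q, W (σ q) =
      -4 * (mom W 1 * (mom W (x * y * z) * mom W 1 ^ 2 - mom W (x * y) * mom W z * mom W 1
        - mom W (x * z) * mom W y * mom W 1 - mom W (y * z) * mom W x * mom W 1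
        + 2 * mom W x * mom W y * mom W z)) := by
  have e1 : had 1 0 = 1 ∧ had 1 1 = 1 ∧ had 1 2 = -1 ∧ had 1 3 = -1 := by simp [had]
  have e2 : had 2 0 = 1 ∧ had 2 1 = -1 ∧ had 2 2 = 1 ∧ had 2 3 = -1 := by simp [had]
  have e3 : had 3 0 = -1 ∧ had 3 1 = 1 ∧ had 3 2 = 1 ∧ had 3 3 = -1 := by simp [had]
  rw [replica_trilinear]
  simp only [Fin.sum_univ_four, Fin.prod_univ_four, e1, e2, e3]
  simp only [Fin.reduceEq, if_true, if_false, mul_one, one_mul, mom, Pi.mul_apply, Pi.one_apply]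
  ring

lemma replica_cumulant_two {Ω : Type*} [Fintype Ω] [DecidableEq Ω] (W x y : Ω → ℝ) :
    ∑ σ : Fin 4 → Ω, (∑ r, had 1 r * x (σ r)) * (∑ r, had 1 r * y (σ r)) * ∏ q, W (σ q) =
      4 * mom W 1 ^ 2 * (mom W (x * y) * mom W 1 - mom W x * mom W y) := by
  -- The coefficients `![1, 0, 0, 0]` turn the constant function `1` into the trivial third factor.
  have := replica_trilinear W x y 1 (had 1) (had 1) ![1, 0, 0, 0]
  simp [Fin.sum_univ_four, Fin.prod_univ_four, had, mom] at this ⊢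
  rw [this]
  ring

lemma replica_cumulant_one {Ω : Type*} [Fintype Ω] [DecidableEq Ω] (W x : Ω → ℝ) :
    ∑ σ : Fin 4 → Ω, (∑ r, had 0 r * x (σ r)) * ∏ q, W (σ q) = 4 * mom W 1 ^ 3 * mom W x := by
  have := replica_trilinear W x 1 1 (had 0) ![1, 0, 0, 0] ![1, 0, 0, 0]
  simp [Fin.sum_univ_four, Fin.prod_univ_four, had, mom] at this ⊢
  rw [this]
  ring

/-! ### Griffiths and GHS inequalities -/

lemma mom_one_pos {ι : Type*} [Fintype ι] [DecidableEq ι] (J : ι → ι → ℝ) (h : ι → ℝ) (s : ℝ) :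
    0 < mom (wt J h s) 1 := by
  simp only [mom, Pi.one_apply, one_mul]
  exact Finset.sum_pos (fun ω _ => Real.exp_pos _) Finset.univ_nonempty

/-- The spin at site `i`. -/
def site {ι : Type*} (i : ι) (ω : ι → Bool) : ℝ := sp (ω i)

/-- The total coupling of a configuration to the field `h`. -/
def fieldEnergy {ι : Type*} [Fintype ι] (h : ι → ℝ) (ω : ι → Bool) : ℝ := ∑ i, h i * sp (ω i)

lemma rot_fieldEnergy_mem {ι : Type*} [Fintype ι] {h : ι → ℝ} (hh : ∀ i, 0 ≤ h i) (k : Fin 4) :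
    (fun σ : Fin 4 → ι → Bool => ∑ r, had k r * fieldEnergy h (σ r)) ∈ posCone ι := by
  have : (∑ i, (fun _ => h i) * rot k i) ∈ posCone ι :=
    sum_mem fun i _ => mul_mem (const_mem_posCone (hh i)) (rot_mem_posCone k i)
  convert this using 1
  funext σ
  simp only [Finset.sum_apply, Pi.mul_apply, rot, fieldEnergy, Finset.mul_sum]
  rw [Finset.sum_comm]
  refine Finset.sum_congr rfl fun i _ => Finset.sum_congr rfl fun r _ => ?_
  ring

section Correlation

variable {ι : Type*} [Fintype ι] [DecidableEq ι] {J : ι → ι → ℝ} {h : ι → ℝ} {s : ℝ}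

lemma sum_mul_wt_nonneg (hJ : ∀ i j, 0 ≤ J i j) (hh : ∀ i, 0 ≤ h i) (hs : 0 ≤ s)
    {f : (Fin 4 → ι → Bool) → ℝ} (hf : f ∈ posCone ι) :
    0 ≤ ∑ σ, f σ * ∏ q, wt J h s (σ q) :=
  sum_nonneg_of_mem_posCone (mul_mem hf (wt_mem_posCone hJ hh hs))

/-- First Griffiths inequality. -/
lemma griffiths_one (hJ : ∀ i j, 0 ≤ J i j) (hh : ∀ i, 0 ≤ h i) (hs : 0 ≤ s) (i : ι) :
    0 ≤ mom (wt J h s) (site i) := by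
  have key := sum_mul_wt_nonneg hJ hh hs (rot_mem_posCone 0 i)
  have h1 := replica_cumulant_one (wt J h s) (site i)
  have hZ := mom_one_pos J h s
  refine nonneg_of_mul_nonneg_right (a := 4 * mom (wt J h s) 1 ^ 3) ?_ (by positivity)
  rw [← h1]
  exact key

/-- Second Griffiths inequality. -/
lemma griffiths_two (hJ : ∀ i j, 0 ≤ J i j) (hh : ∀ i, 0 ≤ h i) (hs : 0 ≤ s) (i j : ι) :
    0 ≤ mom (wt J h s) (site i * site j) * mom (wt J h s) 1
      - mom (wt J h s) (site i) * mom (wt J h s) (site j) := by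
  have key := sum_mul_wt_nonneg hJ hh hs (mul_mem (rot_mem_posCone 1 i) (rot_mem_posCone 1 j))
  have h1 := replica_cumulant_two (wt J h s) (site i) (site j)
  have hZ := mom_one_pos J h s
  refine nonneg_of_mul_nonneg_right (a := 4 * mom (wt J h s) 1 ^ 2) ?_ (by positivity)
  rw [← h1]
  exact key

/-- The Griffiths-Hurst-Sherman inequality, contracted with the field in two of its three
indices and multiplied by the cube of the partition function. -/
lemma ghs (hJ : ∀ i j, 0 ≤ J i j) (hh : ∀ i, 0 ≤ h i) (hs : 0 ≤ s) (i : ι) :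
    mom (wt J h s) (site i * fieldEnergy h * fieldEnergy h) * mom (wt J h s) 1 ^ 2
      - 2 * mom (wt J h s) (site i * fieldEnergy h) * mom (wt J h s) (fieldEnergy h)
        * mom (wt J h s) 1
      - mom (wt J h s) (fieldEnergy h * fieldEnergy h) * mom (wt J h s) (site i)
        * mom (wt J h s) 1
      + 2 * mom (wt J h s) (site i) * mom (wt J h s) (fieldEnergy h) ^ 2 ≤ 0 := by
  have key := sum_mul_wt_nonneg hJ hh hs (mul_mem (mul_mem (rot_mem_posCone 1 i)
    (rot_fieldEnergy_mem hh 2)) (rot_fieldEnergy_mem hh 3))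
  have h1 := replica_cumulant_three (wt J h s) (site i) (fieldEnergy h) (fieldEnergy h)
  have hZ := mom_one_pos J h s
  have h2 := le_of_le_of_eq (a := (0 : ℝ)) key h1
  have h3 := nonpos_of_mul_nonneg_right h2 (by norm_num)
  have h4 := nonpos_of_mul_nonpos_right h3 hZ
  linarith

lemma hasDerivAt_mom (J : ι → ι → ℝ) (h : ι → ℝ) (f : (ι → Bool) → ℝ) (s : ℝ) :
    HasDerivAt (fun s => mom (wt J h s) f) (mom (wt J h s) (f * fieldEnergy h)) s := by
  simp only [mom]
  refine HasDerivAt.fun_sum fun ω _ => ?_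
  have h1 : HasDerivAt (fun s : ℝ => 1 / 2 * (∑ i, ∑ j, J i j * sp (ω i) * sp (ω j))
      + s * ∑ i, h i * sp (ω i)) (∑ i, h i * sp (ω i)) s := by
    simpa using ((hasDerivAt_id s).mul_const (∑ i, h i * sp (ω i))).const_add
      (1 / 2 * (∑ i, ∑ j, J i j * sp (ω i) * sp (ω j)))
  have h2 := h1.exp.const_mul (f ω)
  refine h2.congr_deriv ?_
  simp only [Pi.mul_apply, fieldEnergy, wt]
  ring

lemma abs_sp (b : Bool) : |sp b| = 1 := by cases b <;> simp [sp]

lemma mom_site_le (i : ι) : mom (wt J h s) (site i) ≤ mom (wt J h s) 1 := by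
  refine Finset.sum_le_sum fun ω _ => mul_le_mul_of_nonneg_right ?_ (Real.exp_pos _).le
  exact (le_abs_self _).trans (abs_sp _).le

/-- The covariance of a spin with the total field energy, that is the derivative of the
magnetization in the strength `s` of the field at `s = 1`, is at most `1`. -/
lemma field_cov_le (hJ : ∀ i j, 0 ≤ J i j) (hh : ∀ i, 0 ≤ h i) (i : ι) :
    (mom (wt J h 1) (site i * fieldEnergy h) * mom (wt J h 1) 1
      - mom (wt J h 1) (site i) * mom (wt J h 1) (fieldEnergy h)) / mom (wt J h 1) 1 ^ 2 ≤ 1 := by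
  set V : ℝ → ℝ := fun s => (mom (wt J h s) (site i * fieldEnergy h) * mom (wt J h s) 1
      - mom (wt J h s) (site i) * mom (wt J h s) (fieldEnergy h)) / mom (wt J h s) 1 ^ 2 with hV
  have hZ := mom_one_pos J h
  have dZ : ∀ s, HasDerivAt (fun s => mom (wt J h s) 1) (mom (wt J h s) (fieldEnergy h)) s := by
    intro s
    simpa using hasDerivAt_mom J h 1 s
  have d1 : ∀ s, HasDerivAt (fun s => mom (wt J h s) (site i) / mom (wt J h s) 1) (V s) s :=
    fun s => (hasDerivAt_mom J h (site i) s).fun_div (dZ s) (hZ s).ne'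
  have d2 := fun s => (((hasDerivAt_mom J h (site i * fieldEnergy h) s).fun_mul (dZ s)).fun_sub
    ((hasDerivAt_mom J h (site i) s).fun_mul (hasDerivAt_mom J h (fieldEnergy h) s))).fun_div
      ((dZ s).fun_pow 2) (pow_ne_zero 2 (hZ s).ne')
  have hanti : AntitoneOn V (Set.Ici 0) := by
    refine antitoneOn_of_deriv_nonpos (convex_Ici 0)
      (fun s _ => (d2 s).continuousAt.continuousWithinAt)
      (fun s _ => (d2 s).differentiableAt.differentiableWithinAt) fun s hs => ?_
    rw [interior_Ici] at hs
    rw [(d2 s).deriv]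
    refine div_nonpos_of_nonpos_of_nonneg ?_ (by positivity)
    have := mul_nonpos_of_nonneg_of_nonpos (hZ s).le (ghs hJ hh (le_of_lt hs) i)
    refine le_trans (le_of_eq ?_) this
    simp only [Nat.cast_ofNat]
    ring
  obtain ⟨c, hc, hc'⟩ := exists_hasDerivAt_eq_slope
    (fun s => mom (wt J h s) (site i) / mom (wt J h s) 1) V zero_lt_one
    (fun s _ => (d1 s).continuousAt.continuousWithinAt) (fun s _ => d1 s)
  have h1 : V 1 ≤ V c := hanti (Set.mem_Ici.2 hc.1.le) (Set.mem_Ici.2 zero_le_one) hc.2.le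
  have h2 : mom (wt J h 1) (site i) / mom (wt J h 1) 1 ≤ 1 :=
    (div_le_one (hZ 1)).2 (mom_site_le i)
  have h3 : 0 ≤ mom (wt J h 0) (site i) / mom (wt J h 0) 1 :=
    div_nonneg (griffiths_one hJ hh le_rfl i) (hZ 0).le
  have h4 : V 1 ≤ 1 := by
    rw [hc'] at h1
    linarith
  exact h4

/-- The susceptibility of a spin is at most the inverse of the smallest field. -/
lemma sum_cov_le (hJ : ∀ i j, 0 ≤ J i j) {b : ℝ} (hb : 0 < b) (hbh : ∀ i, b ≤ h i) (i : ι) :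
    ∑ j, (mom (wt J h 1) (site i * site j) / mom (wt J h 1) 1
      - mom (wt J h 1) (site i) / mom (wt J h 1) 1 * (mom (wt J h 1) (site j) / mom (wt J h 1) 1))
      ≤ 1 / b := by
  have hh : ∀ i, 0 ≤ h i := fun i => hb.le.trans (hbh i)
  have hZ := mom_one_pos J h 1
  have e1 : mom (wt J h 1) (fieldEnergy h) = ∑ j, h j * mom (wt J h 1) (site j) := by
    simp only [mom, fieldEnergy, site, Finset.mul_sum, Finset.sum_mul]
    rw [Finset.sum_comm]
    exact Finset.sum_congr rfl fun j _ => Finset.sum_congr rfl fun ω _ => by ring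
  have e2 : mom (wt J h 1) (site i * fieldEnergy h)
      = ∑ j, h j * mom (wt J h 1) (site i * site j) := by
    simp only [mom, fieldEnergy, site, Pi.mul_apply, Finset.mul_sum, Finset.sum_mul]
    rw [Finset.sum_comm]
    exact Finset.sum_congr rfl fun j _ => Finset.sum_congr rfl fun ω _ => by ring
  have h1 := field_cov_le hJ hh i
  rw [le_div_iff₀ hb, Finset.sum_mul]
  refine le_trans (Finset.sum_le_sum (g := fun j => h j *
    ((mom (wt J h 1) (site i * site j) * mom (wt J h 1) 1
      - mom (wt J h 1) (site i) * mom (wt J h 1) (site j)) / mom (wt J h 1) 1 ^ 2))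
    fun j _ => ?_) (le_trans (le_of_eq ?_) h1)
  · rw [mul_comm]
    have e : mom (wt J h 1) (site i * site j) / mom (wt J h 1) 1
      - mom (wt J h 1) (site i) / mom (wt J h 1) 1 * (mom (wt J h 1) (site j) / mom (wt J h 1) 1)
      = (mom (wt J h 1) (site i * site j) * mom (wt J h 1) 1
      - mom (wt J h 1) (site i) * mom (wt J h 1) (site j)) / mom (wt J h 1) 1 ^ 2 := by
      field_simp
    rw [e]
    exact mul_le_mul_of_nonneg_right (hbh j)
      (div_nonneg (griffiths_two hJ hh zero_le_one i j) (by positivity))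
  · rw [e1, e2, Finset.sum_mul, Finset.mul_sum, ← Finset.sum_sub_distrib, Finset.sum_div]
    refine Finset.sum_congr rfl fun j _ => ?_
    ring

end Correlation

/-! ### Estimates for the hyperbolic tangent -/

lemma tanh_deriv (x : ℝ) : HasDerivAt Real.tanh (1 - Real.tanh x ^ 2) x := by
  have hc := (Real.cosh_pos x).ne'
  have h1 := (Real.hasDerivAt_sinh x).fun_div (Real.hasDerivAt_cosh x) hc
  have e : Real.tanh = fun x => Real.sinh x / Real.cosh x := by
    funext y; exact Real.tanh_eq_sinh_div_cosh y
  rw [e]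
  refine h1.congr_deriv ?_
  field_simp

lemma tanh_mono : Monotone Real.tanh := by
  refine monotone_of_deriv_nonneg (fun x => (tanh_deriv x).differentiableAt) fun x => ?_
  rw [(tanh_deriv x).deriv, sub_nonneg]
  exact (sq_le_one_iff_abs_le_one _).2 (Real.abs_tanh_lt_one x).le

/-- The second derivative of `tanh` is at least `-2`; the summand `x ^ 2` compensates for it. -/
lemma convexOn_sq_add_tanh : ConvexOn ℝ Set.univ (fun x : ℝ => x ^ 2 + Real.tanh x) := by
  have d1 : ∀ x, HasDerivAt (fun x : ℝ => x ^ 2 + Real.tanh x)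
      (2 * x + (1 - Real.tanh x ^ 2)) x := fun x => by
    simpa using (hasDerivAt_pow 2 x).fun_add (tanh_deriv x)
  have d2 : ∀ x, HasDerivAt (fun x : ℝ => 2 * x + (1 - Real.tanh x ^ 2))
      (2 - 2 * Real.tanh x * (1 - Real.tanh x ^ 2)) x := fun x => by
    have := ((hasDerivAt_id x).const_mul (2 : ℝ)).fun_add (((tanh_deriv x).fun_pow 2).const_sub 1)
    refine this.congr_deriv ?_
    simp
    ring
  have e1 : deriv (fun x : ℝ => x ^ 2 + Real.tanh x) = fun x => 2 * x + (1 - Real.tanh x ^ 2) :=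
    funext fun x => (d1 x).deriv
  refine convexOn_univ_of_deriv2_nonneg (fun x => (d1 x).differentiableAt) ?_ fun x => ?_
  · rw [e1]; exact fun x => (d2 x).differentiableAt
  · rw [Function.iterate_succ, Function.iterate_one, Function.comp, e1, (d2 x).deriv]
    have h1 := Real.tanh_lt_one x
    have h2 := Real.neg_one_lt_tanh x
    have h3 : 0 ≤ 1 - Real.tanh x ^ 2 := by nlinarith
    nlinarith [mul_nonneg (sub_nonneg.2 h1.le) h3, sq_nonneg (Real.tanh x)]

lemma tanh_mean_sub_le {Ω : Type*} [Fintype Ω] {p : Ω → ℝ} (hp : ∀ ω, 0 ≤ p ω)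
    (hp1 : ∑ ω, p ω = 1) (Y : Ω → ℝ) :
    Real.tanh (∑ ω, p ω * Y ω) - ∑ ω, p ω * Real.tanh (Y ω)
      ≤ ∑ ω, p ω * Y ω ^ 2 - (∑ ω, p ω * Y ω) ^ 2 := by
  have := convexOn_sq_add_tanh.map_sum_le (t := univ) (w := p) (p := Y) (fun ω _ => hp ω) hp1
    (fun _ _ => Set.mem_univ _)
  simp only [smul_eq_mul, mul_add, Finset.sum_add_distrib] at this
  linarith

/-- The error in exchanging `tanh` and a mean is at most the variance. -/
lemma abs_tanh_mean_sub_le {Ω : Type*} [Fintype Ω] {p : Ω → ℝ} (hp : ∀ ω, 0 ≤ p ω)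
    (hp1 : ∑ ω, p ω = 1) (Y : Ω → ℝ) :
    |∑ ω, p ω * Real.tanh (Y ω) - Real.tanh (∑ ω, p ω * Y ω)|
      ≤ ∑ ω, p ω * Y ω ^ 2 - (∑ ω, p ω * Y ω) ^ 2 := by
  have h1 := tanh_mean_sub_le hp hp1 Y
  have h2 := tanh_mean_sub_le hp hp1 (fun ω => -Y ω)
  simp only [mul_neg, Finset.sum_neg_distrib, Real.tanh_neg, neg_sq] at h2
  rw [abs_le]
  constructor <;> linarith

lemma tanh_sub_le {a b c : ℝ} (hc : 0 < c) (hca : c ≤ a) (hab : a ≤ b) :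
    Real.tanh b - Real.tanh a ≤ 1 / c * (b - a) := by
  refine Convex.image_sub_le_mul_sub_of_deriv_le (convex_Ici c)
    (fun x _ => (tanh_deriv x).continuousAt.continuousWithinAt)
    (fun x _ => (tanh_deriv x).differentiableAt.differentiableWithinAt) (fun x hx => ?_)
    a hca b (hca.trans hab) hab
  rw [interior_Ici] at hx
  have hx : c < x := hx
  rw [(tanh_deriv x).deriv, le_div_iff₀ hc]
  have hs : x ≤ Real.sinh x := Real.self_le_sinh_iff.2 (hc.trans hx).le
  have hC := Real.cosh_pos x
  have hq := Real.cosh_sq x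
  have : 1 - Real.tanh x ^ 2 = 1 / Real.cosh x ^ 2 := by
    rw [Real.tanh_eq_sinh_div_cosh]
    field_simp
    linarith
  rw [this, div_mul_eq_mul_div, div_le_one (by positivity)]
  nlinarith [sq_nonneg (Real.sinh x - 1)]

/-! ### The local field and the mean-field equation -/

/-- The configuration `ω` with the spin at `i₀` reversed. -/
def flipAt {ι : Type*} [DecidableEq ι] (i₀ : ι) (ω : ι → Bool) : ι → Bool :=
  Function.update ω i₀ (!ω i₀)

lemma flip_involutive {ι : Type*} [DecidableEq ι] (i₀ : ι) :
    Function.Involutive (flipAt i₀) := fun ω => by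
  simp [flipAt]

lemma sp_flip {ι : Type*} [DecidableEq ι] (i₀ i : ι) (ω : ι → Bool) :
    sp (flipAt i₀ ω i) = sp (ω i) - 2 * sp (ω i₀) * (if i = i₀ then 1 else 0) := by
  by_cases hi : i = i₀
  · subst hi
    cases hω : ω i <;> simp [flipAt, sp, hω] <;> norm_num
  · simp [flipAt, hi]

section MeanField

variable {ι : Type*} [Fintype ι] [DecidableEq ι] {J : ι → ι → ℝ} {h : ι → ℝ}

/-- The field felt by the spin at `i₀`. The diagonal term `J i₀ i₀` is left out since it only
contributes a constant to the energy. -/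
def localField (J : ι → ι → ℝ) (h : ι → ℝ) (i₀ : ι) (ω : ι → Bool) : ℝ :=
  h i₀ + ∑ j ∈ univ.erase i₀, J i₀ j * sp (ω j)

lemma localField_flip (i₀ : ι) (ω : ι → Bool) :
    localField J h i₀ (flipAt i₀ ω) = localField J h i₀ ω := by
  unfold localField
  congr 1
  refine Finset.sum_congr rfl fun j hj => ?_
  rw [sp_flip, if_neg (Finset.ne_of_mem_erase hj), mul_zero, sub_zero]

lemma wt_flip (hsym : ∀ i j, J i j = J j i) (i₀ : ι) (ω : ι → Bool) :
    wt J h 1 (flipAt i₀ ω) = wt J h 1 ω * Real.exp (-2 * (sp (ω i₀) * localField J h i₀ ω)) := by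
  rw [wt, wt, ← Real.exp_add]
  congr 1
  have hY : localField J h i₀ ω = h i₀ + (∑ j, J i₀ j * sp (ω j) - J i₀ i₀ * sp (ω i₀)) := by
    rw [localField, ← Finset.add_sum_erase univ _ (Finset.mem_univ i₀)]
    ring
  have e1 : ∑ i, h i * sp (flipAt i₀ ω i) = ∑ i, h i * sp (ω i) - 2 * sp (ω i₀) * h i₀ := by
    simp only [sp_flip, mul_sub, Finset.sum_sub_distrib]
    simp
    ring
  have e2 : ∑ i, ∑ j, J i j * sp (flipAt i₀ ω i) * sp (flipAt i₀ ω j)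
      = ∑ i, ∑ j, J i j * sp (ω i) * sp (ω j)
        - 4 * sp (ω i₀) * ∑ j, J i₀ j * sp (ω j) + 4 * (sp (ω i₀) * sp (ω i₀)) * J i₀ i₀ := by
    have e3 : ∀ i j, J i j * sp (flipAt i₀ ω i) * sp (flipAt i₀ ω j) = J i j * sp (ω i) * sp (ω j)
        - 2 * sp (ω i₀) * (if j = i₀ then J i j * sp (ω i) else 0)
        - 2 * sp (ω i₀) * (if i = i₀ then J i j * sp (ω j) else 0)
        + 4 * (sp (ω i₀) * sp (ω i₀)) * (if i = i₀ then (if j = i₀ then J i j else 0) else 0) := by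
      intro i j
      rw [sp_flip, sp_flip]
      split_ifs <;> ring
    simp only [e3, Finset.sum_add_distrib, Finset.sum_sub_distrib, ← Finset.mul_sum,
      Finset.sum_ite_eq', Finset.mem_univ, if_true]
    rw [Finset.sum_comm (f := fun i j => if i = i₀ then J i j * sp (ω j) else 0),
      Finset.sum_comm (f := fun i j => if i = i₀ then (if j = i₀ then J i j else 0) else 0)]
    simp only [Finset.sum_ite_eq', Finset.mem_univ, if_true, hsym _ i₀]
    ring
  rw [e1, e2, hY]
  ring

/-- A spin in the field `y` has mean `tanh y`, in terms of its two weights relative to `sp b`. -/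
lemma tanh_two_point (y : ℝ) (b : Bool) :
    (sp b - Real.tanh y) + (-sp b - Real.tanh y) * Real.exp (-2 * (sp b * y)) = 0 := by
  have h1 := Real.exp_pos y
  have h2 := Real.exp_pos (-y)
  have h3 : Real.exp y * Real.exp (-y) = 1 := by rw [← Real.exp_add]; simp
  rw [Real.tanh_eq]
  cases b
  · have : Real.exp (-2 * (sp false * y)) = Real.exp y * Real.exp y := by
      rw [← Real.exp_add]; congr 1; simp [sp]; ring
    rw [this]
    simp only [sp]
    field_simp
    simp
    linear_combination (2 * Real.exp y) * h3
  · have : Real.exp (-2 * (sp true * y)) = Real.exp (-y) * Real.exp (-y) := by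
      rw [← Real.exp_add]; congr 1; simp [sp]; ring
    rw [this]
    simp only [sp]
    field_simp
    simp
    linear_combination (-2 * Real.exp (-y)) * h3

/-- The magnetization at `i₀` is the mean of `tanh` of the local field: given the other spins,
`tanh` of the local field is the conditional mean of the spin at `i₀`. -/
lemma dlr (hsym : ∀ i j, J i j = J j i) (i₀ : ι) :
    mom (wt J h 1) (site i₀) = mom (wt J h 1) (fun ω => Real.tanh (localField J h i₀ ω)) := by
  rw [← sub_eq_zero, mom, mom, ← Finset.sum_sub_distrib]
  set g : (ι → Bool) → ℝ := fun ω =>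
    site i₀ ω * wt J h 1 ω - Real.tanh (localField J h i₀ ω) * wt J h 1 ω with hg
  have h1 : ∑ ω, g (flipAt i₀ ω) = ∑ ω, g ω :=
    Equiv.sum_comp (flip_involutive i₀).toPerm g
  have h2 : ∑ ω, (g ω + g (flipAt i₀ ω)) = 0 := by
    refine Finset.sum_eq_zero fun ω _ => ?_
    simp only [hg, site, localField_flip, wt_flip hsym, sp_flip, if_true]
    linear_combination wt J h 1 ω * tanh_two_point (localField J h i₀ ω) (ω i₀)
  rw [Finset.sum_add_distrib, h1] at h2
  show ∑ ω, g ω = 0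
  linarith

lemma var_localField_le (hJ : ∀ i j, 0 ≤ J i j) {b : ℝ} (hb : 0 < b) (hbh : ∀ i, b ≤ h i)
    (i₀ : ι) {c : ℝ} (hc : ∀ j, J i₀ j ≤ c) :
    ∑ ω, wt J h 1 ω / mom (wt J h 1) 1 * localField J h i₀ ω ^ 2
      - (∑ ω, wt J h 1 ω / mom (wt J h 1) 1 * localField J h i₀ ω) ^ 2
      ≤ c / b * ∑ j, J i₀ j := by
  have hZ := mom_one_pos J h 1
  have hh : ∀ i, 0 ≤ h i := fun i => hb.le.trans (hbh i)
  set Z := mom (wt J h 1) 1 with hZdef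
  set S := univ.erase i₀
  set p : (ι → Bool) → ℝ := fun ω => wt J h 1 ω / Z with hp
  have hp1 : ∑ ω, p ω = 1 := by
    rw [← Finset.sum_div, div_eq_one_iff_eq hZ.ne', hZdef]
    simp [mom]
  have hmom : ∀ f : (ι → Bool) → ℝ, mom (wt J h 1) f / Z = ∑ ω, p ω * f ω := fun f => by
    rw [mom, Finset.sum_div]
    exact Finset.sum_congr rfl fun ω _ => by rw [hp]; ring
  set C : ι → ι → ℝ := fun i j => mom (wt J h 1) (site i * site j) / Z
    - mom (wt J h 1) (site i) / Z * (mom (wt J h 1) (site j) / Z) with hC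
  have hC0 : ∀ i j, 0 ≤ C i j := fun i j => by
    have := griffiths_two hJ hh zero_le_one i j
    have e : C i j = (mom (wt J h 1) (site i * site j) * Z
      - mom (wt J h 1) (site i) * mom (wt J h 1) (site j)) / Z ^ 2 := by
      simp only [hC]
      field_simp
    rw [e]
    positivity
  have hvar : ∑ ω, p ω * localField J h i₀ ω ^ 2 - (∑ ω, p ω * localField J h i₀ ω) ^ 2
      = ∑ i ∈ S, ∑ j ∈ S, J i₀ i * J i₀ j * C i j := by
    have l1 : ∑ ω, p ω * localField J h i₀ ω
        = h i₀ + ∑ i ∈ S, J i₀ i * ∑ ω, p ω * site i ω := by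
      simp only [localField, mul_add, Finset.sum_add_distrib, ← Finset.sum_mul, hp1, one_mul]
      congr 1
      simp only [Finset.mul_sum, site]
      rw [Finset.sum_comm]
      exact Finset.sum_congr rfl fun i _ => Finset.sum_congr rfl fun ω _ => by ring
    have l2 : ∑ ω, p ω * localField J h i₀ ω ^ 2
        = h i₀ ^ 2 + 2 * h i₀ * (∑ i ∈ S, J i₀ i * ∑ ω, p ω * site i ω)
          + ∑ i ∈ S, ∑ j ∈ S, J i₀ i * J i₀ j * ∑ ω, p ω * (site i ω * site j ω) := by
      have : ∀ ω, p ω * localField J h i₀ ω ^ 2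
          = p ω * h i₀ ^ 2 + 2 * h i₀ * (p ω * localField J h i₀ ω - p ω * h i₀)
            + ∑ i ∈ S, ∑ j ∈ S, J i₀ i * J i₀ j * (p ω * (site i ω * site j ω)) := fun ω => by
        have e : ∑ i ∈ S, ∑ j ∈ S, J i₀ i * J i₀ j * (p ω * (site i ω * site j ω))
            = p ω * ((∑ i ∈ S, J i₀ i * sp (ω i)) * (∑ i ∈ S, J i₀ i * sp (ω i))) := by
          rw [Finset.sum_mul_sum, Finset.mul_sum]
          refine Finset.sum_congr rfl fun i _ => ?_
          rw [Finset.mul_sum]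
          exact Finset.sum_congr rfl fun j _ => by simp only [site]; ring
        rw [e, localField]
        ring
      simp only [this, Finset.sum_add_distrib, ← Finset.mul_sum, Finset.sum_sub_distrib,
        ← Finset.sum_mul, hp1, l1]
      rw [Finset.sum_comm]
      congr 1
      · ring
      refine Finset.sum_congr rfl fun i _ => ?_
      rw [Finset.sum_comm]
      exact Finset.sum_congr rfl fun j _ => by rw [Finset.mul_sum]
    have l3 : (∑ i ∈ S, J i₀ i * ∑ ω, p ω * site i ω) ^ 2 = ∑ i ∈ S, ∑ j ∈ S,
        J i₀ i * J i₀ j * ((∑ ω, p ω * site i ω) * (∑ ω, p ω * site j ω)) := by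
      rw [sq, Finset.sum_mul_sum]
      exact Finset.sum_congr rfl fun i _ => Finset.sum_congr rfl fun j _ => by ring
    rw [l1, l2]
    simp only [hC, hmom, mul_sub, Finset.sum_sub_distrib, ← l3, Pi.mul_apply]
    ring
  rw [hvar]
  have hc0 : 0 ≤ c := (hJ i₀ i₀).trans (hc i₀)
  calc ∑ i ∈ S, ∑ j ∈ S, J i₀ i * J i₀ j * C i j
      ≤ ∑ i ∈ S, J i₀ i * (c * (1 / b)) := by
        refine Finset.sum_le_sum fun i _ => ?_
        simp only [mul_assoc, ← Finset.mul_sum]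
        refine mul_le_mul_of_nonneg_left ?_ (hJ i₀ i)
        calc ∑ j ∈ S, J i₀ j * C i j ≤ ∑ j ∈ S, c * C i j :=
              Finset.sum_le_sum fun j _ => mul_le_mul_of_nonneg_right (hc j) (hC0 i j)
          _ ≤ ∑ j, c * C i j := Finset.sum_le_sum_of_subset_of_nonneg (Finset.subset_univ _)
              fun j _ _ => mul_nonneg hc0 (hC0 i j)
          _ = c * ∑ j, C i j := (Finset.mul_sum _ _ _).symm
          _ ≤ c * (1 / b) := mul_le_mul_of_nonneg_left (sum_cov_le hJ hb hbh i) hc0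
    _ ≤ ∑ i, J i₀ i * (c * (1 / b)) := Finset.sum_le_sum_of_subset_of_nonneg
        (Finset.subset_univ _) fun j _ _ => mul_nonneg (hJ _ _) (by positivity)
    _ = c / b * ∑ j, J i₀ j := by rw [← Finset.sum_mul]; ring

/-- The mean-field equation at `i₀`, with the constant `1 + ‖J_1‖_1`. -/
theorem mean_field_bound (hsym : ∀ i j, J i j = J j i) (hJ : ∀ i j, 0 ≤ J i j) {b : ℝ}
    (hb : 0 < b) (hbh : ∀ i, b ≤ h i) (i₀ : ι) {c : ℝ} (hc : ∀ j, J i₀ j ≤ c)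
    {m : ι → ℝ} (hm : ∀ i, m i = mom (wt J h 1) (site i) / mom (wt J h 1) 1) :
    |m i₀ - Real.tanh (h i₀ + ∑ i, J i₀ i * m i)| ≤ c / b * (1 + ∑ j, J i₀ j) := by
  have hh : ∀ i, 0 ≤ h i := fun i => hb.le.trans (hbh i)
  have hZ := mom_one_pos J h 1
  set p : (ι → Bool) → ℝ := fun ω => wt J h 1 ω / mom (wt J h 1) 1 with hp
  have hp1 : ∑ ω, p ω = 1 := by
    rw [← Finset.sum_div, div_eq_one_iff_eq hZ.ne']
    simp [mom]
  have hp0 : ∀ ω, 0 ≤ p ω := fun ω => div_nonneg (Real.exp_pos _).le hZ.le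
  have hmom : ∀ f : (ι → Bool) → ℝ,
      mom (wt J h 1) f / mom (wt J h 1) 1 = ∑ ω, p ω * f ω := fun f => by
    rw [mom, Finset.sum_div]
    exact Finset.sum_congr rfl fun ω _ => by rw [hp]; ring
  have hm0 : ∀ i, 0 ≤ m i := fun i => by
    rw [hm]; exact div_nonneg (griffiths_one hJ hh zero_le_one i) hZ.le
  have hm1 : m i₀ ≤ 1 := by rw [hm]; exact (div_le_one hZ).2 (mom_site_le i₀)
  have hdlr : m i₀ = ∑ ω, p ω * Real.tanh (localField J h i₀ ω) := by
    rw [hm, dlr hsym, hmom]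
  set a := h i₀ + ∑ i ∈ univ.erase i₀, J i₀ i * m i with ha
  have hmean : ∑ ω, p ω * localField J h i₀ ω = a := by
    simp only [localField, mul_add, Finset.sum_add_distrib, ← Finset.sum_mul, hp1, one_mul, ha,
      hm, hmom]
    congr 1
    simp only [Finset.mul_sum, site]
    rw [Finset.sum_comm]
    exact Finset.sum_congr rfl fun i _ => Finset.sum_congr rfl fun ω _ => by ring
  have hfull : h i₀ + ∑ i, J i₀ i * m i = a + J i₀ i₀ * m i₀ := by
    rw [ha, ← Finset.add_sum_erase univ _ (Finset.mem_univ i₀)]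
    ring
  have hba : b ≤ a := by
    have : 0 ≤ ∑ i ∈ univ.erase i₀, J i₀ i * m i :=
      Finset.sum_nonneg fun i _ => mul_nonneg (hJ _ _) (hm0 i)
    linarith [hbh i₀]
  have h1 : |m i₀ - Real.tanh a| ≤ c / b * ∑ j, J i₀ j := by
    rw [hdlr, ← hmean]
    exact (abs_tanh_mean_sub_le hp0 hp1 _).trans (var_localField_le hJ hb hbh i₀ hc)
  have hd0 : 0 ≤ J i₀ i₀ * m i₀ := mul_nonneg (hJ _ _) (hm0 _)
  have h2 : Real.tanh (a + J i₀ i₀ * m i₀) - Real.tanh a ≤ c / b := by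
    have h3 := tanh_sub_le hb hba (le_add_of_nonneg_right hd0 : a ≤ a + J i₀ i₀ * m i₀)
    have h4 : J i₀ i₀ * m i₀ ≤ c := by nlinarith [hJ i₀ i₀, hc i₀]
    calc _ ≤ 1 / b * (a + J i₀ i₀ * m i₀ - a) := h3
      _ = (J i₀ i₀ * m i₀) / b := by ring
      _ ≤ c / b := div_le_div_of_nonneg_right h4 hb.le
  have h3 : 0 ≤ Real.tanh (a + J i₀ i₀ * m i₀) - Real.tanh a :=
    sub_nonneg.2 (tanh_mono (le_add_of_nonneg_right hd0))
  rw [hfull, mul_add, mul_one]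
  rw [abs_le] at h1 ⊢
  constructor <;> linarith [h1.1, h1.2]

end MeanField

/-- **Single-site mean-field bound (eq. 2.1).**
For the ferromagnetic spin system with `h ≥ 0`, `ĥ = min_i h_i > 0`, the first magnetization
satisfies `|m_1 - tanh(h_1 + J_1ᵀ m)| ≤ (‖J_1‖_∞/ĥ)(3 + ‖J_1‖_1 + log(1 + ‖J_1‖_1/ĥ))`,
where `J_1` is the first column of `J`. -/
theorem single_site_mean_field_equation
    (N : ℕ) [NeZero N]
    (J : Matrix (Fin N) (Fin N) ℝ)
    (hJsym : ∀ i j, J i j = J j i)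
    (hJnonneg : ∀ i j, 0 ≤ J i j)
    (h : Fin N → ℝ) (hh : ∀ i, 0 ≤ h i)
    (spin : Bool → ℝ) (hspin : spin = fun b => if b then 1 else -1)
    (H : (Fin N → Bool) → ℝ)
    (hH : ∀ σ, H σ = -(1/2) * (∑ i, ∑ j, J i j * spin (σ i) * spin (σ j))
          - ∑ i, h i * spin (σ i))
    (Z : ℝ) (hZ : Z = ∑ σ : Fin N → Bool, Real.exp (-H σ))
    (m : Fin N → ℝ)
    (hm : ∀ k, m k = (∑ σ : Fin N → Bool, spin (σ k) * Real.exp (-H σ)) / Z)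
    (hhat : ℝ) (hhat_def : hhat = ⨅ i, h i) (hhat_pos : 0 < hhat)
    (J1inf : ℝ) (hJ1inf : J1inf = ⨆ i, J 0 i)
    (J1one : ℝ) (hJ1one : J1one = ∑ i, J 0 i) :
    |m 0 - Real.tanh (h 0 + ∑ i, J 0 i * m i)| ≤
      J1inf / hhat * (3 + J1one + Real.log (1 + J1one / hhat)) := by
  have hsp : spin = sp := hspin
  have hW : ∀ σ, Real.exp (-H σ) = wt (fun i j => J i j) h 1 σ := fun σ => by
    rw [wt, hH, hsp]
    congr 1
    ring
  have hmin : ∀ i, hhat ≤ h i := fun i => hhat_def ▸ ciInf_le (Set.finite_range h).bddBelow i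
  have hmax : ∀ j, J 0 j ≤ J1inf := fun j =>
    hJ1inf ▸ le_ciSup (Set.finite_range fun i => J 0 i).bddAbove j
  have key := mean_field_bound hJsym hJnonneg hhat_pos hmin 0 hmax (m := m) fun i => by
    rw [hm, hZ, hsp]
    simp only [hW, mom, site, Pi.one_apply, one_mul]
  have h1 : 0 ≤ J1one := hJ1one ▸ Finset.sum_nonneg fun j _ => hJnonneg 0 j
  have h2 : 0 ≤ J1inf := (hJnonneg 0 0).trans (hmax 0)
  have h3 : 0 ≤ Real.log (1 + J1one / hhat) :=
    Real.log_nonneg (le_add_of_nonneg_right (div_nonneg h1 hhat_pos.le))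
  refine key.trans (mul_le_mul_of_nonneg_left ?_ (div_nonneg h2 hhat_pos.le))
  rw [← hJ1one]
  linarith
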